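/- Continuity of the Petz–Rényi divergence in α (upper bound): Let ρ, σ be states on ℂ^d and γ ∈ (0,1]. Then for all δ with 0 < δ ≤ γ/2, D_{1+δ}(ρ‖σ) ≤ D(ρ‖σ) + δ · c_γ(ρ‖σ)² in the extended reals. -/

import Mathlib

open scoped Kronecker ComplexOrder

noncomputable section

namespace QCD

attribute [local instance] Classical.propDecidable

variable {n m : Type} [Fintype n] [DecidableEq n] [Fintype m] [DecidableEq m]

/-- The real part of the trace of a complex matrix. -/
def rtr (A : Matrix n n ℂ) : ℝ := (A.trace).re

/-- A quantum state: positive semidefinite with trace one. -/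
def IsState (ρ : Matrix n n ℂ) : Prop := ρ.PosSemidef ∧ ρ.trace = 1

/-- Loewner order: `A ≤ B` iff `B - A` is positive semidefinite. -/
def loewnerLE (A B : Matrix n n ℂ) : Prop := (B - A).PosSemidef

/-- Support containment (for PSD matrices): `ker σ ⊆ ker ρ`. -/
def SuppLE (ρ σ : Matrix n n ℂ) : Prop := ∀ v : n → ℂ, σ.mulVec v = 0 → ρ.mulVec v = 0

/-- Functional calculus for Hermitian matrices (junk value `0` otherwise). -/
def matFun (f : ℝ → ℝ) (A : Matrix n n ℂ) : Matrix n n ℂ :=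
  if hA : A.IsHermitian then
    (hA.eigenvectorUnitary : Matrix n n ℂ) *
      Matrix.diagonal (fun i => (f (hA.eigenvalues i) : ℂ)) *
      (star (hA.eigenvectorUnitary : Matrix n n ℂ))
  else 0

/-- Matrix square root via functional calculus. -/
def msqrt (A : Matrix n n ℂ) : Matrix n n ℂ := matFun Real.sqrt A

/-- Matrix real power taken on the support (`0 ^ t := 0`). -/
def mpow (A : Matrix n n ℂ) (t : ℝ) : Matrix n n ℂ :=
  matFun (fun x => if x = 0 then 0 else x ^ t) A

/-- Matrix base-2 logarithm on the support. -/
def mlog (A : Matrix n n ℂ) : Matrix n n ℂ := matFun (Real.logb 2) A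

/-- Positive part of a Hermitian matrix. -/
def mposPart (A : Matrix n n ℂ) : Matrix n n ℂ := matFun (fun x => max x 0) A

/-- Trace norm. -/
def traceNorm (A : Matrix n m ℂ) : ℝ := rtr (msqrt (A.conjTranspose * A))

/-- Base-2 logarithm as an extended real (`⊥` on nonpositive input). -/
def elog (x : ℝ) : EReal := if x ≤ 0 then ⊥ else ((Real.logb 2 x : ℝ) : EReal)

/-- Base-2 logarithm of an extended real. -/
def elogE (x : EReal) : EReal := if x = ⊤ then ⊤ else elog x.toReal

/-- `2 ^ x` for an extended real `x`. -/
def epow2 (x : EReal) : EReal :=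
  if x = ⊤ then ⊤ else if x = ⊥ then 0 else ((((2:ℝ) ^ x.toReal : ℝ)) : EReal)

/-- Umegaki relative entropy (base 2), `⊤` if the support condition fails. -/
def relEntropy (ρ σ : Matrix n n ℂ) : EReal :=
  if SuppLE ρ σ then ((rtr (ρ * (mlog ρ - mlog σ)) : ℝ) : EReal) else ⊤

/-- Petz–Rényi divergence (base 2). -/
def petzRenyi (α : ℝ) (ρ σ : Matrix n n ℂ) : EReal :=
  if 1 < α ∧ ¬ SuppLE ρ σ then ⊤
  else (((α - 1)⁻¹ : ℝ) : EReal) * elog (rtr (mpow ρ α * mpow σ (1 - α)))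

/-- Geometric (maximal) Rényi divergence (base 2). -/
def geomRenyi (α : ℝ) (ρ σ : Matrix n n ℂ) : EReal :=
  if SuppLE ρ σ then
    (((α - 1)⁻¹ : ℝ) : EReal) *
      elog (rtr (σ * mpow (mpow σ (-(1/2 : ℝ)) * ρ * mpow σ (-(1/2 : ℝ))) α))
  else ⊤

/-- Max-relative entropy (base 2). -/
def dMax (ρ σ : Matrix n n ℂ) : EReal :=
  sInf {x : EReal | ∃ lam : ℝ, x = (lam : EReal) ∧ loewnerLE ρ ((((2:ℝ) ^ lam : ℝ) : ℂ) • σ)}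

/-- Uhlmann fidelity. -/
def fidelity (ρ σ : Matrix n n ℂ) : ℝ := (rtr (msqrt (msqrt σ * ρ * msqrt σ))) ^ 2

/-- Sine (purified) distance. -/
def sineDist (ρ σ : Matrix n n ℂ) : ℝ := Real.sqrt (1 - fidelity ρ σ)

/-- Smoothed max-relative entropy: smoothing over states in the sine-distance ball. -/
def dMaxSmooth (δ : ℝ) (ρ σ : Matrix n n ℂ) : EReal :=
  ⨅ (ρ' : Matrix n n ℂ) (_ : IsState ρ' ∧ sineDist ρ ρ' ≤ δ), dMax ρ' σ

/-- Hypothesis testing divergence (base 2). -/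
def dH (ε : ℝ) (ρ σ : Matrix n n ℂ) : EReal :=
  - elog (sInf {x : ℝ | ∃ T : Matrix n n ℂ,
      T.PosSemidef ∧ ((1 : Matrix n n ℂ) - T).PosSemidef ∧ 1 - ε ≤ rtr (T * ρ) ∧ x = rtr (T * σ)})

/-- The quantity `c_γ(ρ‖σ)`. -/
def cGamma (γ : ℝ) (ρ σ : Matrix n n ℂ) : EReal :=
  ((γ⁻¹ : ℝ) : EReal) *
    elogE (epow2 ((γ : ℝ) * petzRenyi (1 + γ) ρ σ) +
           epow2 (((-γ : ℝ) : EReal) * petzRenyi (1 - γ) ρ σ) + 1)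

/-- Binary entropy (base 2). -/
def binEnt (x : ℝ) : ℝ := -(x * Real.logb 2 x) - (1 - x) * Real.logb 2 (1 - x)

/-- Action of `id_k ⊗ Φ` on block matrices. -/
def blockApply {k : Type} (Φ : Matrix n n ℂ →ₗ[ℂ] Matrix m m ℂ)
    (M : Matrix (k × n) (k × n) ℂ) : Matrix (k × m) (k × m) ℂ :=
  Matrix.of fun p q => Φ (Matrix.of fun a b => M (p.1, a) (q.1, b)) p.2 q.2

/-- Action of `Φ ⊗ id_k` on block matrices. -/
def blockApplyRight {k : Type} (Φ : Matrix n n ℂ →ₗ[ℂ] Matrix m m ℂ)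
    (M : Matrix (n × k) (n × k) ℂ) : Matrix (m × k) (m × k) ℂ :=
  Matrix.of fun p q => Φ (Matrix.of fun a b => M (a, p.2) (b, q.2)) p.1 q.1

/-- Quantum channel: trace preserving and completely positive. -/
def IsQChannel (Φ : Matrix n n ℂ →ₗ[ℂ] Matrix m m ℂ) : Prop :=
  (∀ M : Matrix n n ℂ, (Φ M).trace = M.trace) ∧
  (∀ k : ℕ, 1 ≤ k → ∀ M : Matrix (Fin k × n) (Fin k × n) ℂ, M.PosSemidef →
    (blockApply Φ M).PosSemidef)

/-- `id_k ⊗ Φ` as a linear map. -/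
def blockApplyL (k : Type) (Φ : Matrix n n ℂ →ₗ[ℂ] Matrix m m ℂ) :
    Matrix (k × n) (k × n) ℂ →ₗ[ℂ] Matrix (k × m) (k × m) ℂ where
  toFun := blockApply Φ
  map_add' M N := by
    ext p q
    show Φ (Matrix.of fun a b => (M + N) (p.1, a) (q.1, b)) p.2 q.2 = _
    have h : (Matrix.of fun a b => (M + N) (p.1, a) (q.1, b)) =
        (Matrix.of fun a b => M (p.1, a) (q.1, b)) +
          (Matrix.of fun a b => N (p.1, a) (q.1, b)) := rfl
    rw [h, map_add]
    rfl
  map_smul' c M := by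
    ext p q
    show Φ (Matrix.of fun a b => (c • M) (p.1, a) (q.1, b)) p.2 q.2 = _
    have h : (Matrix.of fun a b => (c • M) (p.1, a) (q.1, b)) =
        c • (Matrix.of fun a b => M (p.1, a) (q.1, b)) := rfl
    rw [h, map_smul]
    rfl

/-- `Φ ⊗ id_k` as a linear map. -/
def blockApplyRightL (k : Type) (Φ : Matrix n n ℂ →ₗ[ℂ] Matrix m m ℂ) :
    Matrix (n × k) (n × k) ℂ →ₗ[ℂ] Matrix (m × k) (m × k) ℂ where
  toFun := blockApplyRight Φ
  map_add' M N := by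
    ext p q
    show Φ (Matrix.of fun a b => (M + N) (a, p.2) (b, q.2)) p.1 q.1 = _
    have h : (Matrix.of fun a b => (M + N) (a, p.2) (b, q.2)) =
        (Matrix.of fun a b => M (a, p.2) (b, q.2)) +
          (Matrix.of fun a b => N (a, p.2) (b, q.2)) := rfl
    rw [h, map_add]
    rfl
  map_smul' c M := by
    ext p q
    show Φ (Matrix.of fun a b => (c • M) (a, p.2) (b, q.2)) p.1 q.1 = _
    have h : (Matrix.of fun a b => (c • M) (a, p.2) (b, q.2)) =
        c • (Matrix.of fun a b => M (a, p.2) (b, q.2)) := rfl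
    rw [h, map_smul]
    rfl

/-- Tensor product of two channels (Kronecker product action). -/
def tensorChannel {n₁ m₁ n₂ m₂ : Type}
    (E₁ : Matrix n₁ n₁ ℂ →ₗ[ℂ] Matrix m₁ m₁ ℂ) (E₂ : Matrix n₂ n₂ ℂ →ₗ[ℂ] Matrix m₂ m₂ ℂ) :
    Matrix (n₁ × n₂) (n₁ × n₂) ℂ →ₗ[ℂ] Matrix (m₁ × m₂) (m₁ × m₂) ℂ :=
  (blockApplyRightL m₂ E₁).comp (blockApplyL n₁ E₂)

/-- Index type for `k`-fold tensor powers. -/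
def tpow (ι : Type) : ℕ → Type
  | 0 => PUnit
  | (k+1) => tpow ι k × ι

def tpowFintype (ι : Type) [Fintype ι] : ∀ k : ℕ, Fintype (tpow ι k)
  | 0 => inferInstanceAs (Fintype PUnit)
  | (k+1) => letI := tpowFintype ι k; inferInstanceAs (Fintype (tpow ι k × ι))

instance (ι : Type) [Fintype ι] (k : ℕ) : Fintype (tpow ι k) := tpowFintype ι k

def tpowDecEq (ι : Type) [DecidableEq ι] : ∀ k : ℕ, DecidableEq (tpow ι k)
  | 0 => inferInstanceAs (DecidableEq PUnit)
  | (k+1) => letI := tpowDecEq ι k; inferInstanceAs (DecidableEq (tpow ι k × ι))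

instance (ι : Type) [DecidableEq ι] (k : ℕ) : DecidableEq (tpow ι k) := tpowDecEq ι k

/-- `k`-fold Kronecker tensor power of a matrix. -/
def tpowMat (ρ : Matrix n n ℂ) : ∀ k : ℕ, Matrix (tpow n k) (tpow n k) ℂ
  | 0 => 1
  | (k+1) => (tpowMat ρ k) ⊗ₖ ρ

/-- `k`-fold tensor power of a channel. -/
def tpowChannel (Φ : Matrix n n ℂ →ₗ[ℂ] Matrix m m ℂ) :
    ∀ k : ℕ, Matrix (tpow n k) (tpow n k) ℂ →ₗ[ℂ] Matrix (tpow m k) (tpow m k) ℂ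
  | 0 => LinearMap.id
  | (k+1) => tensorChannel (tpowChannel Φ k) Φ

/-- Channel divergence induced by a divergence `𝔇` on states:
sup over `k ≥ 1` and input states `ν` on `ℂ^k ⊗ ℂ^d`. -/
def chDiv (𝔇 : ∀ (p : Type) [Fintype p] [DecidableEq p], Matrix p p ℂ → Matrix p p ℂ → EReal)
    (E F : Matrix n n ℂ →ₗ[ℂ] Matrix m m ℂ) : EReal :=
  ⨆ (k : ℕ) (_ : 1 ≤ k) (ν : Matrix (Fin k × n) (Fin k × n) ℂ) (_ : IsState ν),
    𝔇 (Fin k × m) (blockApply E ν) (blockApply F ν)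

/-- The geometric Rényi divergence as a divergence family. -/
def geomD (α : ℝ) : ∀ (p : Type) [Fintype p] [DecidableEq p],
    Matrix p p ℂ → Matrix p p ℂ → EReal :=
  fun _ _ _ => geomRenyi α

/-- The Umegaki relative entropy as a divergence family. -/
def relD : ∀ (p : Type) [Fintype p] [DecidableEq p],
    Matrix p p ℂ → Matrix p p ℂ → EReal :=
  fun _ _ _ => relEntropy

/-- The hypothesis testing divergence as a divergence family. -/
def dHD (ε : ℝ) : ∀ (p : Type) [Fintype p] [DecidableEq p],
    Matrix p p ℂ → Matrix p p ℂ → EReal :=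
  fun _ _ _ => dH ε

/-- Regularized channel relative entropy. -/
def regRelEntropy (E F : Matrix n n ℂ →ₗ[ℂ] Matrix m m ℂ) : EReal :=
  ⨆ (k : ℕ) (_ : 1 ≤ k),
    (((k : ℝ)⁻¹ : ℝ) : EReal) * chDiv relD (tpowChannel E k) (tpowChannel F k)

end QCD

/-!
If `supp ρ ⊄ supp σ`, both sides are infinite. Otherwise `2 ^ (a * D_{1+a}(ρ‖σ))` is the moment
generating function at `a` of the log-likelihood ratio `X` of `ρ` against `σ` under the
Nussbaum–Szkoła distribution, and `D(ρ‖σ)` is the mean of `X` in bits. The claim is therefore a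
second-order bound on the cumulant generating function of `X`: with
`L = log (E e^{γX} + E e^{-γX})` and `0 ≤ t ≤ 1`,
`log E e^{tγX} ≤ tγ E X + (tL)² / log 2`.

If `tL ≥ 2 log 2`, convexity of the cumulant generating function gives the error term `2tL`, which
is at most `(tL)² / log 2`. Otherwise put `Y = tγX`, so that
`log E e^Y - E Y ≤ E (e^Y - 1 - Y) ≤ 2 (E cosh Y - 1)`. The function
`v ↦ cosh (t arcosh v)` is concave on `[1, ∞)`, so by Jensen's inequality `E cosh Y ≤ cosh (ts)`,
where `cosh s = E cosh (γX)` and hence `s ≤ L`; finally `2 (cosh x - 1) ≤ x² / log 2` for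
`|x| ≤ 2 log 2`.
-/

namespace QCD

section Hyperbolic

open Real Set

theorem convexOn_sinh : ConvexOn ℝ (Ici 0) sinh := by
  refine MonotoneOn.convexOn_of_deriv (convex_Ici 0) continuous_sinh.continuousOn
    differentiable_sinh.differentiableOn ?_
  rw [Real.deriv_sinh, interior_Ici]
  exact cosh_strictMonoOn.monotoneOn.mono Ioi_subset_Ici_self

theorem sinh_mul_le {c y : ℝ} (hc₀ : 0 ≤ c) (hc₁ : c ≤ 1) (hy : 0 ≤ y) :
    sinh (c * y) ≤ c * sinh y := by
  simpa using convexOn_sinh.2 (mem_Ici.2 hy) self_mem_Ici hc₀ (sub_nonneg.2 hc₁) (by ring)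

theorem mul_cosh_mul_sinh_le {t y : ℝ} (ht₀ : 0 ≤ t) (ht₁ : t ≤ 1) (hy : 0 ≤ y) :
    t * cosh (t * y) * sinh y ≤ sinh (t * y) * cosh y := by
  have hpos : 0 < 1 + t := by linarith
  have hsinh : (1 + t) * sinh (y - t * y) ≤ (1 - t) * sinh (y + t * y) := by
    have h := sinh_mul_le (c := (1 - t) / (1 + t)) (y := y + t * y)
      (div_nonneg (by linarith) hpos.le) ((div_le_one hpos).2 (by linarith)) (by positivity)
    have harg : (1 - t) / (1 + t) * (y + t * y) = y - t * y := by field_simp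
    rwa [harg, div_mul_eq_mul_div, le_div_iff₀' hpos] at h
  rw [sinh_sub, sinh_add] at hsinh
  linarith

theorem antitoneOn_sinh_mul_div_sinh {t : ℝ} (ht₀ : 0 ≤ t) (ht₁ : t ≤ 1) :
    AntitoneOn (fun y => sinh (t * y) / sinh y) (Ioi 0) := by
  have hderiv (y : ℝ) (hy : 0 < y) : HasDerivAt (fun y => sinh (t * y) / sinh y)
      ((t * cosh (t * y) * sinh y - sinh (t * y) * cosh y) / sinh y ^ 2) y := by
    have hnum : HasDerivAt (fun y => sinh (t * y)) (t * cosh (t * y)) y := by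
      simpa [mul_comm] using ((hasDerivAt_id y).const_mul t).sinh
    exact hnum.div (hasDerivAt_sinh y) (sinh_pos_iff.2 hy).ne'
  refine antitoneOn_of_hasDerivWithinAt_nonpos (convex_Ioi 0)
    (fun y hy => (hderiv y hy).continuousAt.continuousWithinAt)
    (fun y hy => (hderiv y (interior_subset hy)).hasDerivWithinAt) fun y hy => ?_
  rw [interior_Ioi] at hy
  exact div_nonpos_of_nonpos_of_nonneg
    (sub_nonpos.2 (mul_cosh_mul_sinh_le ht₀ ht₁ (le_of_lt hy))) (sq_nonneg _)

theorem concaveOn_cosh_mul_arcosh {t : ℝ} (ht₀ : 0 ≤ t) (ht₁ : t ≤ 1) :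
    ConcaveOn ℝ (Ici 1) (fun v => cosh (t * arcosh v)) := by
  have hderiv (v : ℝ) (hv : 1 < v) : HasDerivAt (fun v => cosh (t * arcosh v))
      (t * (sinh (t * arcosh v) / sinh (arcosh v))) v := by
    rw [sinh_arcosh hv.le]
    convert ((hasDerivAt_arcosh hv).const_mul t).cosh using 1
    ring
  refine AntitoneOn.concaveOn_of_deriv (convex_Ici 1)
    (continuous_cosh.comp_continuousOn (continuousOn_const.mul continuousOn_arcosh)) ?_ ?_
  · rw [interior_Ici]
    exact fun v hv => (hderiv v hv).differentiableAt.differentiableWithinAt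
  · rw [interior_Ici]
    intro v hv w hw hvw
    rw [(hderiv v hv).deriv, (hderiv w hw).deriv]
    have harcosh : arcosh v ≤ arcosh w := strictMonoOn_arcosh.monotoneOn
      (mem_Ioi.2 (zero_lt_one.trans hv)) (mem_Ioi.2 (zero_lt_one.trans hw)) hvw
    exact mul_le_mul_of_nonneg_left
      (antitoneOn_sinh_mul_div_sinh ht₀ ht₁ (arcosh_pos hv) (arcosh_pos hw) harcosh) ht₀

theorem arcosh_le_log_two_mul {v : ℝ} (hv : 1 ≤ v) : arcosh v ≤ log (2 * v) := by
  rw [le_log_iff_exp_le (by linarith), exp_arcosh hv]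
  have : √(v ^ 2 - 1) ≤ v := Real.sqrt_le_iff.2 ⟨by linarith, by linarith⟩
  linarith

theorem two_mul_cosh_sub_two_le {x : ℝ} (hx : |x| ≤ 2 * log 2) :
    2 * cosh x - 2 ≤ x ^ 2 / log 2 := by
  have hlog : 0 < log 2 := log_pos one_lt_two
  have hsinh : sinh (|x| / 2) ≤ |x| / 2 / log 2 * (3 / 4) := by
    have h := sinh_mul_le (c := |x| / 2 / log 2) (y := log 2) (by positivity)
      ((div_le_one hlog).2 (by linarith)) hlog.le
    rw [div_mul_cancel₀ _ hlog.ne', sinh_log two_pos] at h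
    norm_num at h ⊢
    exact h
  have hhalf : 2 * cosh x - 2 = 4 * sinh (|x| / 2) ^ 2 := by
    have h := cosh_two_mul (|x| / 2)
    rw [mul_div_cancel₀ _ two_ne_zero, cosh_abs, cosh_sq] at h
    linarith
  -- `9 / 16` is `sinh (log 2) ^ 2`.
  have hconst : (9 / 16 : ℝ) ≤ log 2 := by linarith [log_two_gt_d9]
  calc 2 * cosh x - 2 = 4 * sinh (|x| / 2) ^ 2 := hhalf
    _ ≤ 4 * (|x| / 2 / log 2 * (3 / 4)) ^ 2 := by
      have := sinh_nonneg_iff.2 (by positivity : 0 ≤ |x| / 2)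
      gcongr
    _ = x ^ 2 / log 2 * (9 / 16 / log 2) := by rw [← sq_abs x]; ring
    _ ≤ x ^ 2 / log 2 := mul_le_of_le_one_right (by positivity) ((div_le_one hlog).2 hconst)

end Hyperbolic

section CumulantGeneratingFunction

open MeasureTheory ProbabilityTheory Real Set

variable {Ω : Type*} {mΩ : MeasurableSpace Ω} {P : Measure Ω} {X : Ω → ℝ} {γ t : ℝ}

theorem integrable_exp_mul_mul [IsFiniteMeasure P] (ht₀ : 0 ≤ t) (ht₁ : t ≤ 1)
    (h : Integrable (fun ω => exp (γ * X ω)) P) :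
    Integrable (fun ω => exp (t * γ * X ω)) P :=
  convex_integrableExpSet.smul_mem_of_zero_mem
    (by simp [integrableExpSet]) (show γ ∈ integrableExpSet X P from h) ⟨ht₀, ht₁⟩

theorem integrable_of_integrable_exp_mul (hγ : 0 < γ)
    (hpos : Integrable (fun ω => exp (γ * X ω)) P)
    (hneg : Integrable (fun ω => exp (-γ * X ω)) P) : Integrable X P := by
  refine integrable_of_mem_interior_integrableExpSet (mem_interior_iff_mem_nhds.2 ?_)
  filter_upwards [Ioo_mem_nhds (neg_lt_zero.2 hγ) hγ] with s hs
  exact integrable_exp_mul_of_le_of_le hneg hpos hs.1.le hs.2.le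

theorem integrable_cosh_mul (hpos : Integrable (fun ω => exp (γ * X ω)) P)
    (hneg : Integrable (fun ω => exp (-γ * X ω)) P) :
    Integrable (fun ω => cosh (γ * X ω)) P := by
  simp only [cosh_eq, ← neg_mul]
  exact (hpos.add hneg).div_const 2

theorem two_mul_integral_cosh_mul (hpos : Integrable (fun ω => exp (γ * X ω)) P)
    (hneg : Integrable (fun ω => exp (-γ * X ω)) P) :
    2 * ∫ ω, cosh (γ * X ω) ∂P = mgf X P γ + mgf X P (-γ) := by
  rw [mgf, mgf, ← integral_add hpos hneg, ← integral_const_mul]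
  simp only [cosh_eq, neg_mul]
  congr with ω
  ring

variable [IsProbabilityMeasure P]

theorem cgf_mul_le (ht₀ : 0 ≤ t) (ht₁ : t ≤ 1) (h : Integrable (fun ω => exp (γ * X ω)) P) :
    cgf X P (t * γ) ≤ t * cgf X P γ := by
  have hpow (ω : Ω) : exp (t * γ * X ω) = exp (γ * X ω) ^ t := by
    rw [← exp_mul]
    ring_nf
  have ht := integrable_exp_mul_mul ht₀ ht₁ h
  have hjensen : mgf X P (t * γ) ≤ mgf X P γ ^ t := by
    simp only [mgf, hpow] at ht ⊢
    exact (concaveOn_rpow ht₀ ht₁).le_map_integral (continuous_rpow_const ht₀).continuousOn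
      isClosed_Ici (.of_forall fun ω => (exp_pos _).le) h ht
  calc cgf X P (t * γ) ≤ log (mgf X P γ ^ t) := log_le_log (mgf_pos ht) hjensen
    _ = t * cgf X P γ := log_rpow (mgf_pos h) t

theorem mul_integral_le_cgf (hX : Integrable X P) (h : Integrable (fun ω => exp (γ * X ω)) P) :
    γ * ∫ ω, X ω ∂P ≤ cgf X P γ := by
  rw [cgf, le_log_iff_exp_le (mgf_pos h), mgf, ← integral_const_mul]
  exact convexOn_exp.map_integral_le continuous_exp.continuousOn isClosed_univ
    (.of_forall fun _ => mem_univ _) (hX.const_mul γ) h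

theorem integral_cosh_mul_le (hX : AEMeasurable X P) (h : Integrable (fun ω => cosh (X ω)) P)
    (ht₀ : 0 ≤ t) (ht₁ : t ≤ 1) :
    ∫ ω, cosh (t * X ω) ∂P ≤ cosh (t * arcosh (∫ ω, cosh (X ω) ∂P)) := by
  have hcosh (ω : Ω) : cosh (t * arcosh (cosh (X ω))) = cosh (t * X ω) := by
    rw [← cosh_abs (X ω), arcosh_cosh (abs_nonneg _), ← cosh_abs, abs_mul, abs_abs, ← abs_mul,
      cosh_abs]
  have hInt : Integrable (fun ω => cosh (t * X ω)) P := by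
    refine h.mono (continuous_cosh.comp_aestronglyMeasurable
      (hX.const_mul t).aestronglyMeasurable) (.of_forall fun ω => ?_)
    rw [norm_of_nonneg (cosh_pos _).le, norm_of_nonneg (cosh_pos _).le, cosh_le_cosh, abs_mul,
      abs_of_nonneg ht₀]
    exact mul_le_of_le_one_left (abs_nonneg _) ht₁
  have hconcave := concaveOn_cosh_mul_arcosh ht₀ ht₁
  simpa only [hcosh] using hconcave.le_map_integral
    (continuous_cosh.comp_continuousOn (continuousOn_const.mul continuousOn_arcosh)) isClosed_Ici
    (.of_forall fun ω => one_le_cosh (X ω)) h (by simpa only [Function.comp_def, hcosh] using hInt)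

theorem one_le_integral_cosh (h : Integrable (fun ω => cosh (X ω)) P) :
    1 ≤ ∫ ω, cosh (X ω) ∂P := by
  simpa using integral_mono (integrable_const 1) h fun ω => one_le_cosh (X ω)

theorem log_mgf_add_mgf_neg_nonneg (hpos : Integrable (fun ω => exp (γ * X ω)) P)
    (hneg : Integrable (fun ω => exp (-γ * X ω)) P) :
    0 ≤ log (mgf X P γ + mgf X P (-γ)) := by
  have hone := one_le_integral_cosh (integrable_cosh_mul hpos hneg)
  rw [← two_mul_integral_cosh_mul hpos hneg]
  exact log_nonneg (by linarith)

theorem cgf_le_add_two_mul_integral_cosh (hX : Integrable X P)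
    (hpos : Integrable (fun ω => exp (γ * X ω)) P)
    (hneg : Integrable (fun ω => exp (-γ * X ω)) P) :
    cgf X P γ ≤ γ * ∫ ω, X ω ∂P + (2 * ∫ ω, cosh (γ * X ω) ∂P - 2) := by
  have hγ : cgf X P γ ≤ mgf X P γ - 1 := log_le_sub_one_of_pos (mgf_pos hpos)
  have hnegγ : cgf X P (-γ) ≤ mgf X P (-γ) - 1 := log_le_sub_one_of_pos (mgf_pos hneg)
  linarith [two_mul_integral_cosh_mul hpos hneg, mul_integral_le_cgf hX hneg]

theorem cgf_mul_le_add_two_mul_cosh (hγ : 0 < γ) (hpos : Integrable (fun ω => exp (γ * X ω)) P)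
    (hneg : Integrable (fun ω => exp (-γ * X ω)) P) (ht₀ : 0 ≤ t) (ht₁ : t ≤ 1) :
    cgf X P (t * γ) ≤ t * γ * ∫ ω, X ω ∂P +
      (2 * cosh (t * log (mgf X P γ + mgf X P (-γ))) - 2) := by
  have hX := integrable_of_integrable_exp_mul hγ hpos hneg
  have hcosh := integrable_cosh_mul hpos hneg
  have hone := one_le_integral_cosh hcosh
  have hcgf := cgf_le_add_two_mul_integral_cosh hX (integrable_exp_mul_mul ht₀ ht₁ hpos)
    (by simpa only [mul_neg] using integrable_exp_mul_mul ht₀ ht₁ hneg)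
  have hjensen := integral_cosh_mul_le (hX.aemeasurable.const_mul γ) hcosh ht₀ ht₁
  have harcosh := arcosh_le_log_two_mul hone
  rw [two_mul_integral_cosh_mul hpos hneg] at harcosh
  have hmono : cosh (t * arcosh (∫ ω, cosh (γ * X ω) ∂P)) ≤
      cosh (t * log (mgf X P γ + mgf X P (-γ))) := by
    have harcosh₀ := arcosh_nonneg hone
    rw [cosh_le_cosh, abs_of_nonneg (by positivity),
      abs_of_nonneg (mul_nonneg ht₀ (harcosh₀.trans harcosh))]
    gcongr
  simp only [← mul_assoc] at hjensen
  linarith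

theorem cgf_mul_le_add_two_mul_log (hγ : 0 < γ) (hpos : Integrable (fun ω => exp (γ * X ω)) P)
    (hneg : Integrable (fun ω => exp (-γ * X ω)) P) (ht₀ : 0 ≤ t) (ht₁ : t ≤ 1) :
    cgf X P (t * γ) ≤ t * γ * ∫ ω, X ω ∂P + 2 * (t * log (mgf X P γ + mgf X P (-γ))) := by
  have hX := integrable_of_integrable_exp_mul hγ hpos hneg
  have hcgf : cgf X P γ ≤ log (mgf X P γ + mgf X P (-γ)) :=
    log_le_log (mgf_pos hpos) (le_add_of_nonneg_right mgf_nonneg)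
  have hcgf_neg : cgf X P (-γ) ≤ log (mgf X P γ + mgf X P (-γ)) :=
    log_le_log (mgf_pos hneg) (le_add_of_nonneg_left mgf_nonneg)
  have hmean : -γ * ∫ ω, X ω ∂P ≤ log (mgf X P γ + mgf X P (-γ)) :=
    (mul_integral_le_cgf hX hneg).trans hcgf_neg
  linarith [cgf_mul_le ht₀ ht₁ hpos, mul_le_mul_of_nonneg_left hcgf ht₀,
    mul_le_mul_of_nonneg_left hmean ht₀]

theorem cgf_mul_le_add_sq (hγ : 0 < γ) (hpos : Integrable (fun ω => exp (γ * X ω)) P)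
    (hneg : Integrable (fun ω => exp (-γ * X ω)) P) (ht₀ : 0 ≤ t) (ht₁ : t ≤ 1) :
    cgf X P (t * γ) ≤ t * γ * ∫ ω, X ω ∂P +
      (t * log (mgf X P γ + mgf X P (-γ))) ^ 2 / log 2 := by
  have hlog : 0 < log 2 := log_pos one_lt_two
  have hx : 0 ≤ t * log (mgf X P γ + mgf X P (-γ)) :=
    mul_nonneg ht₀ (log_mgf_add_mgf_neg_nonneg hpos hneg)
  obtain hsmall | hlarge := le_total (t * log (mgf X P γ + mgf X P (-γ))) (2 * log 2)
  · have hcosh := two_mul_cosh_sub_two_le ((abs_of_nonneg hx).trans_le hsmall)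
    linarith [cgf_mul_le_add_two_mul_cosh hγ hpos hneg ht₀ ht₁]
  · have hsq : 2 * (t * log (mgf X P γ + mgf X P (-γ))) ≤
        (t * log (mgf X P γ + mgf X P (-γ))) ^ 2 / log 2 := by
      rw [le_div_iff₀ hlog, sq]
      nlinarith
    linarith [cgf_mul_le_add_two_mul_log hγ hpos hneg ht₀ ht₁]

theorem inv_mul_cgf_div_log_two_le {δ : ℝ} (hδ : 0 < δ) (hδγ : δ ≤ γ)
    (hpos : Integrable (fun ω => exp (γ * X ω)) P)
    (hneg : Integrable (fun ω => exp (-γ * X ω)) P) :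
    δ⁻¹ * (cgf X P δ / log 2) ≤ (∫ ω, X ω ∂P) / log 2 +
      δ * (γ⁻¹ * logb 2 (mgf X P γ + mgf X P (-γ) + 1)) ^ 2 := by
  have hγ : 0 < γ := hδ.trans_le hδγ
  have hnonneg := log_mgf_add_mgf_neg_nonneg hpos hneg
  have hmono : log (mgf X P γ + mgf X P (-γ)) ≤ log (mgf X P γ + mgf X P (-γ) + 1) :=
    log_le_log (add_pos (mgf_pos hpos) (mgf_pos hneg)) (le_add_of_nonneg_right zero_le_one)
  have hcgf := cgf_mul_le_add_sq hγ hpos hneg (div_pos hδ hγ).le ((div_le_one hγ).2 hδγ)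
  rw [div_mul_cancel₀ _ hγ.ne'] at hcgf
  calc δ⁻¹ * (cgf X P δ / log 2)
    _ ≤ δ⁻¹ * ((δ * ∫ ω, X ω ∂P +
          (δ / γ * log (mgf X P γ + mgf X P (-γ) + 1)) ^ 2 / log 2) / log 2) := by
      gcongr
      exact hcgf.trans (by gcongr)
    _ = (∫ ω, X ω ∂P) / log 2 +
          δ * (γ⁻¹ * logb 2 (mgf X P γ + mgf X P (-γ) + 1)) ^ 2 := by
      rw [logb]
      field_simp

end CumulantGeneratingFunction

section FunctionalCalculus

variable {n : Type} [Fintype n] [DecidableEq n] {A B : Matrix n n ℂ}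

theorem matFun_eq (hA : A.IsHermitian) (f : ℝ → ℝ) :
    matFun f A = (hA.eigenvectorUnitary : Matrix n n ℂ) *
      Matrix.diagonal (fun i => (f (hA.eigenvalues i) : ℂ)) *
      star (hA.eigenvectorUnitary : Matrix n n ℂ) :=
  dif_pos hA

theorem matFun_id (hA : A.IsHermitian) : matFun id A = A := by
  rw [matFun_eq hA]
  exact hA.spectral_theorem.symm

theorem matFun_one (hA : A.IsHermitian) : matFun 1 A = 1 := by
  simp [matFun_eq hA]

theorem star_eigenvectorUnitary_mul_matFun (hA : A.IsHermitian) (f : ℝ → ℝ) :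
    star (hA.eigenvectorUnitary : Matrix n n ℂ) * matFun f A =
      Matrix.diagonal (fun i => (f (hA.eigenvalues i) : ℂ)) *
        star (hA.eigenvectorUnitary : Matrix n n ℂ) := by
  rw [matFun_eq hA, ← mul_assoc, ← mul_assoc, Unitary.coe_star_mul_self, one_mul]

theorem matFun_mul_matFun (hA : A.IsHermitian) (f g : ℝ → ℝ) :
    matFun f A * matFun g A = matFun (f * g) A := by
  rw [matFun_eq hA f, mul_assoc, star_eigenvectorUnitary_mul_matFun hA g, matFun_eq hA (f * g),
    ← mul_assoc, mul_assoc _ (Matrix.diagonal _) (Matrix.diagonal _),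
    Matrix.diagonal_mul_diagonal]
  simp only [Pi.mul_apply, Complex.ofReal_mul]

/-- The squared modulus `|⟨uᵢ, vⱼ⟩|²` of the overlap between the eigenvectors `uᵢ` of `A` and `vⱼ`
of `B`, through which traces of products of functions of `A` and of `B` become double sums over
the two spectra. -/
def eigenOverlap (hA : A.IsHermitian) (hB : B.IsHermitian) (i j : n) : ℝ :=
  Complex.normSq ((star (hA.eigenvectorUnitary : Matrix n n ℂ) * hB.eigenvectorUnitary) i j)

theorem eigenOverlap_nonneg (hA : A.IsHermitian) (hB : B.IsHermitian) (i j : n) :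
    0 ≤ eigenOverlap hA hB i j :=
  Complex.normSq_nonneg _

theorem rtr_diagonal_mul_mul_diagonal_mul_star (x y : n → ℝ) (W : Matrix n n ℂ) :
    rtr (Matrix.diagonal (fun i => (x i : ℂ)) * W * Matrix.diagonal (fun j => (y j : ℂ)) * star W) =
      ∑ i, ∑ j, x i * y j * Complex.normSq (W i j) := by
  simp only [rtr, Matrix.trace, Matrix.diag, Matrix.mul_apply (N := star W), Matrix.mul_diagonal,
    Matrix.diagonal_mul, Matrix.star_apply, Complex.re_sum, RCLike.star_def]
  refine Finset.sum_congr rfl fun i _ => Finset.sum_congr rfl fun j _ => ?_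
  rw [mul_right_comm _ (W i j), mul_assoc, Complex.mul_conj]
  norm_cast

theorem rtr_matFun_mul_matFun (hA : A.IsHermitian) (hB : B.IsHermitian) (f g : ℝ → ℝ) :
    rtr (matFun f A * matFun g B) =
      ∑ i, ∑ j, f (hA.eigenvalues i) * g (hB.eigenvalues j) * eigenOverlap hA hB i j := by
  simp only [eigenOverlap]
  rw [← rtr_diagonal_mul_mul_diagonal_mul_star, matFun_eq hA, matFun_eq hB, star_mul, star_star]
  simp only [rtr, mul_assoc]
  rw [Matrix.trace_mul_comm]
  simp only [mul_assoc]

theorem eigenvalues_mul_eigenOverlap_eq_zero (hA : A.IsHermitian) (hB : B.IsHermitian)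
    (hAB : SuppLE A B) {i j : n} (hj : hB.eigenvalues j = 0) :
    hA.eigenvalues i * eigenOverlap hA hB i j = 0 := by
  have hker : A.mulVec ((hB.eigenvectorUnitary : Matrix n n ℂ).mulVec (Pi.single j 1)) = 0 := by
    apply hAB
    rw [hB.eigenvectorUnitary_mulVec, hB.mulVec_eigenvectorBasis, hj, zero_smul]
  have hentry : (hA.eigenvalues i : ℂ) *
      (star (hA.eigenvectorUnitary : Matrix n n ℂ) * hB.eigenvectorUnitary) i j = 0 := by
    have hstar := star_eigenvectorUnitary_mul_matFun hA id
    simp only [matFun_id hA, id] at hstar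
    have h := congrFun (congrArg (star (hA.eigenvectorUnitary : Matrix n n ℂ)).mulVec hker) i
    rwa [Matrix.mulVec_mulVec, hstar, Matrix.mulVec_mulVec, Matrix.mulVec_zero, mul_assoc,
      Matrix.mulVec_single_one, Matrix.col_apply, Matrix.diagonal_mul] at h
  rcases mul_eq_zero.1 hentry with h | h
  · rw [Complex.ofReal_eq_zero.1 h, zero_mul]
  · rw [eigenOverlap, h, map_zero, mul_zero]

end FunctionalCalculus

section LogRatioLaw

open MeasureTheory ProbabilityTheory Real

variable {n : Type} [Fintype n] [DecidableEq n] {ρ σ : Matrix n n ℂ}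

/-- The law of the log-likelihood ratio `log λᵢ - log μⱼ` when `(i, j)` is drawn with the
Nussbaum–Szkoła weights `λᵢ |⟨uᵢ, vⱼ⟩|²`, where `ρ = ∑ᵢ λᵢ |uᵢ⟩⟨uᵢ|` and `σ = ∑ⱼ μⱼ |vⱼ⟩⟨vⱼ|`. It
carries the divergences of `ρ` and `σ` as classical moments. The junk value `log 0 = 0` places an
atom of positive mass only when `ρ` has weight outside the support of `σ`. -/
def logRatioLaw (hρ : ρ.IsHermitian) (hσ : σ.IsHermitian) : Measure ℝ :=
  ∑ i, ∑ j, ENNReal.ofReal (hρ.eigenvalues i * eigenOverlap hρ hσ i j) •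
    Measure.dirac (log (hρ.eigenvalues i) - log (hσ.eigenvalues j))

theorem integrable_logRatioLaw (hρ : ρ.IsHermitian) (hσ : σ.IsHermitian) (F : ℝ → ℝ) :
    Integrable F (logRatioLaw hρ hσ) := by
  simp only [logRatioLaw, integrable_finsetSum_measure]
  exact fun i _ j _ => (integrable_dirac (by simp)).smul_measure ENNReal.ofReal_ne_top

theorem integral_logRatioLaw (hρ : ρ.PosSemidef) (hσ : σ.IsHermitian) (F : ℝ → ℝ) :
    ∫ x, F x ∂logRatioLaw hρ.1 hσ =
      ∑ i, ∑ j, hρ.1.eigenvalues i * eigenOverlap hρ.1 hσ i j *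
        F (log (hρ.1.eigenvalues i) - log (hσ.eigenvalues j)) := by
  have hInt (i j : n) : Integrable F
      (ENNReal.ofReal (hρ.1.eigenvalues i * eigenOverlap hρ.1 hσ i j) •
        Measure.dirac (log (hρ.1.eigenvalues i) - log (hσ.eigenvalues j))) :=
    (integrable_dirac (by simp)).smul_measure ENNReal.ofReal_ne_top
  rw [logRatioLaw, integral_finsetSum_measure
    fun i _ => integrable_finsetSum_measure.2 fun j _ => hInt i j]
  refine Finset.sum_congr rfl fun i _ => ?_
  rw [integral_finsetSum_measure fun j _ => hInt i j]
  refine Finset.sum_congr rfl fun j _ => ?_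
  rw [integral_smul_measure, integral_dirac, smul_eq_mul, ENNReal.toReal_ofReal
    (mul_nonneg (hρ.eigenvalues_nonneg i) (eigenOverlap_nonneg hρ.1 hσ i j))]

theorem measureReal_univ_logRatioLaw (hρ : ρ.PosSemidef) (hσ : σ.IsHermitian) :
    (logRatioLaw hρ.1 hσ).real Set.univ = rtr ρ := by
  have hmass : (logRatioLaw hρ.1 hσ).real Set.univ = ∫ _, 1 ∂logRatioLaw hρ.1 hσ := by simp
  have htrace := rtr_matFun_mul_matFun hρ.1 hσ id 1
  rw [matFun_id hρ.1, matFun_one hσ, mul_one] at htrace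
  rw [hmass, integral_logRatioLaw hρ hσ, htrace]
  simp

theorem isProbabilityMeasure_logRatioLaw (hρ : IsState ρ) (hσ : σ.IsHermitian) :
    IsProbabilityMeasure (logRatioLaw hρ.1.1 hσ) := by
  have htrace : rtr ρ = 1 := by rw [rtr, hρ.2, Complex.one_re]
  exact isProbabilityMeasure_iff_real.2 ((measureReal_univ_logRatioLaw hρ.1 hσ).trans htrace)

theorem rtr_mpow_mul_mpow (hρ : ρ.PosSemidef) (hσ : σ.PosSemidef) (hρσ : SuppLE ρ σ) (a : ℝ) :
    rtr (mpow ρ (1 + a) * mpow σ (-a)) = mgf id (logRatioLaw hρ.1 hσ.1) a := by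
  rw [mgf, integral_logRatioLaw hρ hσ.1, mpow, mpow, rtr_matFun_mul_matFun hρ.1 hσ.1]
  refine Finset.sum_congr rfl fun i _ => Finset.sum_congr rfl fun j _ => ?_
  obtain hi | hi := (hρ.eigenvalues_nonneg i).eq_or_lt
  · simp [← hi]
  obtain hj | hj := (hσ.eigenvalues_nonneg j).eq_or_lt
  · simp [← hj, eigenvalues_mul_eigenOverlap_eq_zero hρ.1 hσ.1 hρσ hj.symm]
  have hexp : exp (a * (log (hρ.1.eigenvalues i) - log (hσ.1.eigenvalues j))) =
      hρ.1.eigenvalues i ^ a * hσ.1.eigenvalues j ^ (-a) := by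
    rw [rpow_def_of_pos hi, rpow_def_of_pos hj, ← exp_add]
    ring_nf
  rw [if_neg hi.ne', if_neg hj.ne', id, hexp, rpow_add hi, rpow_one]
  ring

theorem rtr_mul_mlog_sub_mlog (hρ : ρ.PosSemidef) (hσ : σ.IsHermitian) :
    rtr (ρ * (mlog ρ - mlog σ)) = (∫ x, x ∂logRatioLaw hρ.1 hσ) / log 2 := by
  have hρρ : ρ * mlog ρ = matFun (id * logb 2) ρ * matFun 1 σ := by
    rw [matFun_one hσ, mul_one, ← matFun_mul_matFun hρ.1, matFun_id hρ.1, mlog]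
  have hρσ : ρ * mlog σ = matFun id ρ * matFun (logb 2) σ := by rw [matFun_id hρ.1, mlog]
  have hsub : rtr (ρ * (mlog ρ - mlog σ)) = rtr (ρ * mlog ρ) - rtr (ρ * mlog σ) := by
    simp only [rtr, mul_sub, Matrix.trace_sub, Complex.sub_re]
  rw [hsub, hρρ, hρσ, rtr_matFun_mul_matFun hρ.1 hσ, rtr_matFun_mul_matFun hρ.1 hσ,
    integral_logRatioLaw hρ hσ, Finset.sum_div, ← Finset.sum_sub_distrib]
  refine Finset.sum_congr rfl fun i _ => ?_
  rw [Finset.sum_div, ← Finset.sum_sub_distrib]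
  refine Finset.sum_congr rfl fun j _ => ?_
  simp only [Pi.mul_apply, Pi.one_apply, id, logb]
  ring

end LogRatioLaw

section Divergences

open MeasureTheory ProbabilityTheory Real

variable {n : Type} [Fintype n] [DecidableEq n] {ρ σ : Matrix n n ℂ} {a γ δ : ℝ}

theorem elog_of_pos {x : ℝ} (hx : 0 < x) : elog x = (logb 2 x : ℝ) :=
  if_neg hx.not_ge

theorem elogE_coe_of_pos {x : ℝ} (hx : 0 < x) : elogE (x : EReal) = (logb 2 x : ℝ) := by
  rw [elogE, if_neg (EReal.coe_ne_top x), EReal.toReal_coe, elog_of_pos hx]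

theorem epow2_top : epow2 ⊤ = ⊤ := if_pos rfl

theorem epow2_coe (x : ℝ) : epow2 x = (2 ^ x : ℝ) := by
  simp [epow2]

theorem epow2_ne_bot (x : EReal) : epow2 x ≠ ⊥ := by
  unfold epow2
  split_ifs
  exacts [top_ne_bot, EReal.zero_ne_bot, EReal.coe_ne_bot _]

theorem relEntropy_of_suppLE (hρ : ρ.PosSemidef) (hσ : σ.IsHermitian) (hρσ : SuppLE ρ σ) :
    relEntropy ρ σ = ((∫ x, x ∂logRatioLaw hρ.1 hσ) / log 2 : ℝ) := by
  rw [relEntropy, if_pos hρσ, rtr_mul_mlog_sub_mlog hρ hσ]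

theorem relEntropy_of_not_suppLE (hρσ : ¬SuppLE ρ σ) : relEntropy ρ σ = ⊤ :=
  if_neg hρσ

theorem mgf_logRatioLaw_pos (hρ : IsState ρ) (hσ : σ.IsHermitian) (a : ℝ) :
    0 < mgf id (logRatioLaw hρ.1.1 hσ) a :=
  have := isProbabilityMeasure_logRatioLaw hρ hσ
  mgf_pos (integrable_logRatioLaw hρ.1.1 hσ _)

theorem petzRenyi_one_add (hρ : IsState ρ) (hσ : σ.PosSemidef) (hρσ : SuppLE ρ σ) (a : ℝ) :
    petzRenyi (1 + a) ρ σ = (a⁻¹ * (cgf id (logRatioLaw hρ.1.1 hσ.1) a / log 2) : ℝ) := by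
  rw [petzRenyi, if_neg fun h => h.2 hρσ, add_sub_cancel_left, sub_add_cancel_left,
    rtr_mpow_mul_mpow hρ.1 hσ hρσ, elog_of_pos (mgf_logRatioLaw_pos hρ hσ.1 a), EReal.coe_mul]
  rfl

theorem epow2_mul_petzRenyi_one_add (hρ : IsState ρ) (hσ : σ.PosSemidef) (hρσ : SuppLE ρ σ)
    (ha : a ≠ 0) :
    epow2 (a * petzRenyi (1 + a) ρ σ) = (mgf id (logRatioLaw hρ.1.1 hσ.1) a : ℝ) := by
  rw [petzRenyi_one_add hρ hσ hρσ, ← EReal.coe_mul, mul_inv_cancel_left₀ ha, epow2_coe, cgf,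
    ← logb, rpow_logb two_pos (by norm_num) (mgf_logRatioLaw_pos hρ hσ.1 a)]

theorem cGamma_of_suppLE (hρ : IsState ρ) (hσ : σ.PosSemidef) (hρσ : SuppLE ρ σ) (hγ : γ ≠ 0) :
    cGamma γ ρ σ = (γ⁻¹ * logb 2 (mgf id (logRatioLaw hρ.1.1 hσ.1) γ +
      mgf id (logRatioLaw hρ.1.1 hσ.1) (-γ) + 1) : ℝ) := by
  have hpos := mgf_logRatioLaw_pos hρ hσ.1
  rw [cGamma, sub_eq_add_neg, epow2_mul_petzRenyi_one_add hρ hσ hρσ hγ,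
    epow2_mul_petzRenyi_one_add hρ hσ hρσ (neg_ne_zero.2 hγ), ← EReal.coe_one, ← EReal.coe_add,
    ← EReal.coe_add, elogE_coe_of_pos (by linarith [hpos γ, hpos (-γ)]), EReal.coe_mul]

theorem cGamma_of_not_suppLE (hρσ : ¬SuppLE ρ σ) (hγ : 0 < γ) : cGamma γ ρ σ = ⊤ := by
  have hpetz : petzRenyi (1 + γ) ρ σ = ⊤ := if_pos ⟨by linarith, hρσ⟩
  rw [cGamma, hpetz, EReal.coe_mul_top_of_pos hγ, epow2_top,
    EReal.top_add_of_ne_bot (epow2_ne_bot _), ← EReal.coe_one, EReal.top_add_coe, elogE,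
    if_pos rfl, EReal.coe_mul_top_of_pos (inv_pos.2 hγ)]

theorem petzRenyi_continuity_upper_general (hρ : IsState ρ) (hσ : σ.PosSemidef) (hδ : 0 < δ)
    (hδγ : δ ≤ γ) :
    petzRenyi (1 + δ) ρ σ ≤ relEntropy ρ σ + δ * (cGamma γ ρ σ * cGamma γ ρ σ) := by
  have hγ : 0 < γ := hδ.trans_le hδγ
  by_cases hρσ : SuppLE ρ σ
  · have := isProbabilityMeasure_logRatioLaw hρ hσ.1
    have hInt := integrable_logRatioLaw hρ.1.1 hσ.1
    rw [petzRenyi_one_add hρ hσ hρσ, relEntropy_of_suppLE hρ.1 hσ.1 hρσ,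
      cGamma_of_suppLE hρ hσ hρσ hγ.ne', ← EReal.coe_mul, ← EReal.coe_mul, ← EReal.coe_add,
      EReal.coe_le_coe_iff, ← sq]
    exact inv_mul_cgf_div_log_two_le hδ hδγ (hInt _) (hInt _)
  · rw [cGamma_of_not_suppLE hρσ hγ, relEntropy_of_not_suppLE hρσ, EReal.top_mul_top,
      EReal.coe_mul_top_of_pos hδ, EReal.top_add_top]
    exact le_top

end Divergences

/-- Continuity of the Petz–Rényi divergence in α (upper bound). -/
theorem petzRenyi_continuity_upper {d : ℕ} (ρ σ : Matrix (Fin d) (Fin d) ℂ)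
    (hρ : IsState ρ) (hσ : IsState σ) (γ : ℝ) (hγ : 0 < γ ∧ γ ≤ 1)
    (δ : ℝ) (hδ : 0 < δ ∧ δ ≤ γ / 2) :
    petzRenyi (1 + δ) ρ σ ≤
      relEntropy ρ σ + (δ : EReal) * (cGamma γ ρ σ * cGamma γ ρ σ) :=
  petzRenyi_continuity_upper_general hρ hσ.1 hδ.1 (hδ.2.trans (half_le_self hγ.1.le))

end QCD
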